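/- arXiv:2406.11194 — 2 statements merged into one kernel-verified Lean document; each statement's English description precedes it below -/
import Mathlib

section
/- Let α be a finite nonempty type and let m, k be natural numbers. Let p : α^m × α^k → ℝ be a probability mass function on pairs (head, tail), with marginal p₁(u) := ∑_{v ∈ α^k} p(u,v) on α^m and conditional p(v | u) := p(u,v)/p₁(u) defined whenever p₁(u) > 0. Fix a target x* ∈ α^m with p₁(x*) > 0, and let r : α^k → ℝ be any probability mass function on α^k that is absolutely continuous with respect to the conditional p(· | x*). Define the joint pmf Q(u,v) := δ_{x*}(u) · r(v), where δ_{x*} is the one-hot distribution at x*. Then D_KL(Q ‖ p) = − log p₁(x*) + D_KL(r ‖ p(· | x*)). -/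
/-- Kullback–Leibler divergence between pmfs on a finite type,
summing over the support of `q`. -/
noncomputable def KL {α : Type*} [Fintype α] (q p : α → ℝ) : ℝ :=
  ∑ x ∈ Finset.univ.filter (fun x => 0 < q x), q x * Real.log (q x / p x)

theorem KL_eq_sum_univ {β : Type*} [Fintype β] (q p : β → ℝ) (hq : ∀ x, 0 ≤ q x) :
    KL q p = ∑ x, q x * Real.log (q x / p x) := by
  unfold KL
  apply Finset.sum_subset (Finset.filter_subset _ _)
  intro x _ hx
  have h : ¬ 0 < q x := by simpa using hx
  have h0 : q x = 0 := le_antisymm (not_lt.mp h) (hq x)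
  rw [h0, zero_mul]

theorem KL_oneHot_head_decomposition {α : Type*} [Fintype α] [Nonempty α] [DecidableEq α]
    (m k : ℕ) (p : ((Fin m → α) × (Fin k → α)) → ℝ)
    (hp0 : ∀ z, 0 ≤ p z) (hp1 : ∑ z, p z = 1)
    (xstar : Fin m → α) (hx : 0 < ∑ v, p (xstar, v))
    (r : (Fin k → α) → ℝ) (hr0 : ∀ v, 0 ≤ r v) (hr1 : ∑ v, r v = 1)
    (hac : ∀ v, 0 < r v → 0 < p (xstar, v) / (∑ v', p (xstar, v'))) :
    KL (fun z : (Fin m → α) × (Fin k → α) =>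
          (if z.1 = xstar then (1 : ℝ) else 0) * r z.2) p
      = - Real.log (∑ v, p (xstar, v))
        + KL r (fun v => p (xstar, v) / (∑ v', p (xstar, v'))) := by
  rw [KL_eq_sum_univ _ _ hr0, KL_eq_sum_univ, Fintype.sum_prod_type, Finset.sum_eq_single xstar]
  · have e : - Real.log (∑ v, p (xstar, v))
        = ∑ v, r v * (- Real.log (∑ v, p (xstar, v))) := by
      rw [← Finset.sum_mul, hr1, one_mul]
    rw [e, ← Finset.sum_add_distrib]
    apply Finset.sum_congr rfl
    intro v _
    simp only [if_true, one_mul]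
    rcases (hr0 v).eq_or_lt with h | h
    · simp [← h]
    · have hp : 0 < p (xstar, v) := by
        have := mul_pos (hac v h) hx
        rwa [div_mul_cancel₀ _ hx.ne'] at this
      rw [Real.log_div h.ne' hp.ne', Real.log_div h.ne' (hac v h).ne',
        Real.log_div hp.ne' hx.ne']
      ring
  · intro u _ hu
    simp [hu]
  · simp
  · intro z
    apply mul_nonneg _ (hr0 _)
    split_ifs <;> norm_num
end

section
/- (Observation 1: fine-tuning with self-sampling is equivalent to vanilla fine-tuning.) Let α be a finite nonempty type and let m, k be natural numbers. Let p : α^m × α^k → ℝ be a probability mass function, with marginal p₁(u) := ∑_{v ∈ α^k} p(u,v) on α^m and conditional p(v | u) := p(u,v)/p₁(u) whenever p₁(u) > 0. Fix x* ∈ α^m with p₁(x*) > 0. Define the self-sampling target Q(u,v) := δ_{x*}(u) · p(v | x*), the pmf obtained by pinning the head to x* and sampling the tail from the model's own conditional. Then the sampled fine-tuning objective equals the vanilla fine-tuning objective: D_KL(Q ‖ p) = D_KL(δ_{x*} ‖ p₁) = − log p₁(x*). -/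
theorem selfSampling_ft_eq_vanilla_ft {α : Type*} [Fintype α] [Nonempty α] [DecidableEq α]
    (m k : ℕ) (p : ((Fin m → α) × (Fin k → α)) → ℝ)
    (hp0 : ∀ z, 0 ≤ p z) (hp1 : ∑ z, p z = 1)
    (xstar : Fin m → α) (hx : 0 < ∑ v, p (xstar, v)) :
    KL (fun z : (Fin m → α) × (Fin k → α) =>
          (if z.1 = xstar then (1 : ℝ) else 0)
            * (p (xstar, z.2) / (∑ v', p (xstar, v')))) p
      = KL (fun u : Fin m → α => if u = xstar then (1 : ℝ) else 0)
           (fun u : Fin m → α => ∑ v, p (u, v))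
    ∧ KL (fun u : Fin m → α => if u = xstar then (1 : ℝ) else 0)
         (fun u : Fin m → α => ∑ v, p (u, v))
        = - Real.log (∑ v, p (xstar, v)) := by
  have key : ∀ {β : Type _} [Fintype β] (q r : β → ℝ), (∀ x, 0 ≤ q x) →
      KL q r = ∑ x, q x * Real.log (q x / r x) := by
    intro β _ q r hq
    unfold KL
    apply Finset.sum_subset (Finset.filter_subset _ _)
    intro x _ hx'
    have : q x = 0 := by
      simp only [Finset.mem_filter, Finset.mem_univ, true_and, not_lt] at hx'
      exact le_antisymm hx' (hq x)
    simp [this]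
  have h2 : KL (fun u : Fin m → α => if u = xstar then (1 : ℝ) else 0)
         (fun u : Fin m → α => ∑ v, p (u, v))
        = - Real.log (∑ v, p (xstar, v)) := by
    rw [key _ _ (fun x => by split_ifs <;> norm_num), Finset.sum_eq_single xstar]
    · simp
    · intro b _ hb
      simp [hb]
    · simp
  refine ⟨?_, h2⟩
  rw [h2, key _ _ (fun z => mul_nonneg (by split_ifs <;> norm_num)
    (div_nonneg (hp0 _) hx.le)), Fintype.sum_prod_type, Finset.sum_eq_single xstar]
  · simp only [if_true, one_mul]
    have : ∀ v, p (xstar, v) / (∑ v', p (xstar, v')) *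
        Real.log (p (xstar, v) / (∑ v', p (xstar, v')) / p (xstar, v))
        = p (xstar, v) * (-Real.log (∑ v', p (xstar, v')) / (∑ v', p (xstar, v'))) := by
      intro v
      by_cases h : p (xstar, v) = 0
      · simp [h]
      · rw [div_right_comm, div_self h, one_div, Real.log_inv]
        ring
    rw [Finset.sum_congr rfl (fun v _ => this v), ← Finset.sum_mul]
    field_simp
  · intro b _ hb
    simp [hb]
  · simp
end
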